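/- For every γ > 0, every λ₀ ∈ (0, π/(2γ)), and every positive integer k, the series below converges and one has 2·(−1)^k·k²·π²·γ·sin(λ₀γ)/(λ₀·(k²π² − γ²λ₀²)²) + ∑_{n=0}^∞ 64·(−1)^k·(1+2n)²·γ²·cos(λ₀γ)/(π⁴·((1+2n)² − 4k²)·((1+2n)² − (2λ₀γ/π)²)²) = C(λ₀)·2·(−1)^k·λ₀·γ·sin(λ₀γ)/(−k²π² + λ₀²γ²). -/

import Mathlib

open Real Set

lemma cv {E : Type*} [AddCommMonoid E] [TopologicalSpace E] {f g : ℕ → E} {a b : E}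
    (h : HasSum g b) (hf : ∀ n, f n = g n) (hab : a = b) : HasSum f a := by
  have : f = g := funext hf
  rw [this, hab]; exact h

lemma L1 (x : ℝ) (h0 : 0 < x) (h1 : x < 1) :
    HasSum (fun n : ℕ => 1 / (((n : ℝ) + 1) ^ 2 - x ^ 2)) ((1 / x - π * (cos (π * x) / sin (π * x))) / (2 * x)) := by
  have hz : (x : ℂ) ∈ Complex.integerComplement := by
    rintro ⟨n, hn⟩
    have hn' : (n : ℝ) = x := by exact_mod_cast hn
    rw [← hn'] at h0 h1
    have : 0 < n := by exact_mod_cast h0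
    have : n < 1 := by exact_mod_cast h1
    omega
  have hs := (summable_cotTerm hz).hasSum
  have e := cot_series_rep' hz
  simp only [cotTerm] at hs
  rw [← e] at hs
  have hs' : HasSum (fun n : ℕ => 1 / (x - ((n : ℝ) + 1)) + 1 / (x + ((n : ℝ) + 1)))
      (π * (cos (π * x) / sin (π * x)) - 1 / x) := by
    rw [← Complex.hasSum_ofReal]
    refine cv hs (fun n => ?_) ?_
    · push_cast; rfl
    · rw [Complex.cot]; push_cast; rfl
  have := hs'.mul_left (-1 / (2 * x))
  refine cv this (fun n => ?_) ?_
  · have hn : (0:ℝ) ≤ n := n.cast_nonneg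
    have a : x - ((n:ℝ)+1) ≠ 0 := by linarith
    have b : x + ((n:ℝ)+1) ≠ 0 := by linarith
    have c : ((n:ℝ)+1)^2 - x^2 ≠ 0 := by nlinarith
    field_simp
    ring
  · field_simp; ring

lemma L2 (y : ℝ) (h0 : 0 < y) (h1 : y < 1) :
    HasSum (fun n : ℕ => 1 / ((1 + 2 * (n : ℝ)) ^ 2 - y ^ 2)) (π * tan (π * y / 2) / (4 * y)) := by
  have A := L1 y h0 h1
  have B := (L1 (y / 2) (by linarith) (by linarith)).mul_left (1 / 4)
  have hs : Summable (fun n : ℕ => 1 / ((1 + 2 * (n : ℝ)) ^ 2 - y ^ 2)) := by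
    have := A.summable.comp_injective (i := fun n : ℕ => 2 * n) (fun a b h => by simpa using h)
    refine this.congr (fun n => ?_)
    simp only [Function.comp]; push_cast; congr 1; ring
  have h := HasSum.even_add_odd (f := fun n : ℕ => 1 / (((n : ℝ) + 1) ^ 2 - y ^ 2))
    (m := ∑' n : ℕ, 1 / ((1 + 2 * (n : ℝ)) ^ 2 - y ^ 2)) (by
      refine cv hs.hasSum (fun n => ?_) rfl
      push_cast; congr 1; ring) (by
      refine cv B (fun n => ?_) rfl
      push_cast
      rw [one_div_mul_one_div]
      congr 1; ring)
  have e := h.unique A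
  have : π * tan (π * y / 2) / (4 * y) = ∑' n : ℕ, 1 / ((1 + 2 * (n : ℝ)) ^ 2 - y ^ 2) := by
    rw [← sub_eq_iff_eq_add.2 e.symm]
    have : π * y = 2 * (π * y / 2) := by ring
    have e3 : π * (y / 2) = (π * y / 2) := by ring
    have p1 : 0 < π * y / 2 := by positivity
    have p2 : π * y / 2 < π / 2 := by nlinarith [pi_pos]
    have c := cos_pos_of_mem_Ioo (x := π * y / 2) ⟨by linarith, p2⟩
    have s := sin_pos_of_pos_of_lt_pi p1 (by linarith)
    rw [e3, tan_eq_sin_div_cos, show cos (π * y) = _ by rw [this, cos_two_mul'],  show sin (π * y) = _ by rw [this, sin_two_mul]]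
    field_simp
    ring
  rw [this]; exact hs.hasSum

lemma L3 (k : ℕ) (hk : 0 < k) :
    HasSum (fun n : ℕ => 1 / ((1 + 2 * (n : ℝ)) ^ 2 - 4 * (k : ℝ) ^ 2)) 0 := by
  have nz : ∀ n : ℕ, 1 + 2 * (n : ℝ) - 2 * k ≠ 0 := by
    intro n h
    have : (1 + 2 * (n : ℤ) - 2 * k) = 0 := by exact_mod_cast h
    omega
  have hk' : (0:ℝ) < k := by exact_mod_cast hk
  let f : ℕ → ℝ := fun n => 1 / (1 + 2 * (n : ℝ) - 2 * k)
  have hf : ∀ n : ℕ, 1 / ((1 + 2 * (n : ℝ)) ^ 2 - 4 * (k : ℝ) ^ 2) = 1 / (4 * k) * (f n - f (2 * k + n)) := by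
    intro n
    have := nz n
    have h2 := nz (2 * k + n)
    have hn : (0:ℝ) ≤ n := n.cast_nonneg
    have h3 : (1 + 2 * (n : ℝ)) ^ 2 - 4 * (k : ℝ) ^ 2 ≠ 0 := by
      rw [show (1 + 2 * (n : ℝ)) ^ 2 - 4 * (k : ℝ) ^ 2 = (1 + 2 * (n : ℝ) - 2 * k) * (1 + 2 * (n : ℝ) + 2 * k) by ring]
      exact mul_ne_zero this (by positivity)
    simp only [f]
    push_cast at h2 ⊢
    field_simp
    ring
  have hz : ∑ n ∈ Finset.range (2 * k), f n = 0 := by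
    have := Finset.sum_range_reflect f (2 * k)
    have h2 : ∑ n ∈ Finset.range (2 * k), f (2 * k - 1 - n) = - ∑ n ∈ Finset.range (2 * k), f n := by
      rw [← Finset.sum_neg_distrib]
      apply Finset.sum_congr rfl
      intro n hn
      rw [Finset.mem_range] at hn
      have : ((2 * k - 1 - n : ℕ) : ℝ) = 2 * k - 1 - n := by
        rw [Nat.sub_sub, Nat.cast_sub (by omega)]; push_cast; ring
      simp only [f, this]
      rw [← one_div_neg_eq_neg_one_div]
      congr 1; ring
    linarith
  have hp : ∀ N, ∑ n ∈ Finset.range N, 1 / ((1 + 2 * (n : ℝ)) ^ 2 - 4 * (k : ℝ) ^ 2)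
      = 1 / (4 * k) * (- ∑ n ∈ Finset.range (2 * k), f (N + n)) := by
    intro N
    simp_rw [hf]
    rw [← Finset.mul_sum, Finset.sum_sub_distrib]
    have a := Finset.sum_range_add f N (2 * k)
    have b := Finset.sum_range_add f (2 * k) N
    rw [add_comm N] at a
    congr 1; linarith
  have hsum : Summable (fun n : ℕ => 1 / ((1 + 2 * (n : ℝ)) ^ 2 - 4 * (k : ℝ) ^ 2)) := by
    rw [← summable_nat_add_iff (2 * k)]
    have := (summable_nat_add_iff 1).2 (Real.summable_one_div_nat_pow.2 (show 1 < 2 by norm_num))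
    refine Summable.of_nonneg_of_le ?_ ?_ this
    · intro n; push_cast; 
      have hn : (0:ℝ) ≤ n := n.cast_nonneg
      apply one_div_nonneg.2; nlinarith
    · intro n; push_cast; 
      have hn : (0:ℝ) ≤ n := n.cast_nonneg
      apply one_div_le_one_div_of_le
      · positivity
      · nlinarith
  rw [hsum.hasSum_iff_tendsto_nat]
  simp_rw [hp]
  rw [show (0:ℝ) = 1 / (4 * k) * (- ∑ n ∈ Finset.range (2 * k), 0) by simp]
  refine Filter.Tendsto.const_mul _ (Filter.Tendsto.neg (tendsto_finsetSum _ ?_))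
  intro i _
  simp only [f, one_div]
  apply Filter.Tendsto.inv_tendsto_atTop
  have : Filter.Tendsto (fun N : ℕ => (N : ℝ)) Filter.atTop Filter.atTop := tendsto_natCast_atTop_atTop
  refine Filter.tendsto_atTop_mono' _ ?_ (Filter.tendsto_atTop_add_const_right _ (-2 * (k:ℝ)) this)
  filter_upwards with N
  push_cast
  have : (0:ℝ) ≤ N := N.cast_nonneg
  have : (0:ℝ) ≤ i := i.cast_nonneg
  linarith

lemma L4 (y : ℝ) (h0 : 0 < y) (h1 : y < 1) :
    HasSum (fun n : ℕ => 1 / ((1 + 2 * (n : ℝ)) ^ 2 - y ^ 2) ^ 2)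
      (1 / (2 * y) * (π ^ 2 / (8 * y * cos (π * y / 2) ^ 2) - π * tan (π * y / 2) / (4 * y ^ 2))) := by
  obtain ⟨r, hr, hr1⟩ := exists_between h1
  have r0 : 0 < r := h0.trans hr
  have r2 : 0 < 1 - r ^ 2 := by nlinarith
  have key : ∀ (n : ℕ) (z : ℝ), z ∈ Ioo 0 r → ((n:ℝ) + 1) * (1 - r ^ 2) ≤ (1 + 2 * (n : ℝ)) ^ 2 - z ^ 2 := by
    intro n z hz
    have hn : (0:ℝ) ≤ n := n.cast_nonneg
    have : z ^ 2 ≤ r ^ 2 := by nlinarith [hz.1, hz.2]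
    nlinarith [mul_nonneg hn (sq_nonneg r)]
  have pos : ∀ (n : ℕ) (z : ℝ), z ∈ Ioo 0 r → 0 < (1 + 2 * (n : ℝ)) ^ 2 - z ^ 2 := by
    intro n z hz
    exact lt_of_lt_of_le (by positivity) (key n z hz)
  have hu : Summable (fun n : ℕ => 2 / (1 - r ^ 2) ^ 2 * (1 / ((n + 1 : ℕ) : ℝ) ^ 2)) :=
    ((summable_nat_add_iff 1).2 (Real.summable_one_div_nat_pow.2 (show 1 < 2 by norm_num))).mul_left _
  have hb : ∀ (n : ℕ) (z : ℝ), z ∈ Ioo 0 r → ‖2 * z / ((1 + 2 * (n : ℝ)) ^ 2 - z ^ 2) ^ 2‖ ≤ 2 / (1 - r ^ 2) ^ 2 * (1 / ((n + 1 : ℕ) : ℝ) ^ 2) := by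
    intro n z hz
    have k1 := key n z hz
    have k2 := pos n z hz
    have z0 := hz.1
    rw [Real.norm_of_nonneg (by positivity), div_mul_div_comm]
    apply div_le_div₀
    · norm_num
    · linarith [hz.2]
    · positivity
    · rw [← mul_pow, mul_comm]; push_cast
      exact pow_le_pow_left₀ (by positivity) k1 2
  have hd := hasDerivAt_tsum_of_isPreconnected hu isOpen_Ioo isPreconnected_Ioo
    (g := fun (n : ℕ) z => 1 / ((1 + 2 * (n : ℝ)) ^ 2 - z ^ 2))
    (g' := fun (n : ℕ) z => 2 * z / ((1 + 2 * (n : ℝ)) ^ 2 - z ^ 2) ^ 2) (t := Ioo 0 r) (y₀ := y) (y := y)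
    (by
      intro n z hz
      have := ((hasDerivAt_pow 2 z).const_sub ((1 + 2 * (n : ℝ)) ^ 2)).inv (pos n z hz).ne'
      simp only [one_div]
      refine this.congr_deriv ?_
      simp) hb ⟨h0, hr⟩ (L2 y h0 h1).summable ⟨h0, hr⟩
  have p1 : 0 < π * y / 2 := by positivity
  have p2 : π * y / 2 < π / 2 := by nlinarith [pi_pos]
  have c := cos_pos_of_mem_Ioo (x := π * y / 2) ⟨by linarith, p2⟩
  have hd2 : HasDerivAt (fun z => π * tan (π * z / 2) / (4 * z))
      (((π * (1 / cos (π * y / 2) ^ 2 * (π / 2))) * (4 * y) - π * tan (π * y / 2) * 4) / (4 * y) ^ 2) y := by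
    have a1 : HasDerivAt (fun z : ℝ => π * z / 2) (π / 2) y := by
      simpa using ((hasDerivAt_id y).const_mul π).div_const 2
    have a2 : HasDerivAt (fun z : ℝ => 4 * z) 4 y := by
      simpa using ((hasDerivAt_id y).const_mul 4)
    exact ((((hasDerivAt_tan c.ne').comp y a1).const_mul π).div a2 (by positivity))
  have he : (fun z => ∑' n : ℕ, 1 / ((1 + 2 * (n : ℝ)) ^ 2 - z ^ 2)) =ᶠ[nhds y] (fun z => π * tan (π * z / 2) / (4 * z)) := by
    filter_upwards [isOpen_Ioo.mem_nhds (show y ∈ Ioo 0 r from ⟨h0, hr⟩)] with z hz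
    exact (L2 z hz.1 (hz.2.trans hr1)).tsum_eq
  have e := hd.unique (hd2.congr_of_eventuallyEq he)
  have hS : Summable (fun n : ℕ => 2 * y / ((1 + 2 * (n : ℝ)) ^ 2 - y ^ 2) ^ 2) :=
    Summable.of_norm_bounded hu (fun n => hb n y ⟨h0, hr⟩)
  have := hS.hasSum
  rw [e] at this
  refine cv (this.mul_left (1 / (2 * y))) (fun n => ?_) ?_
  · field_simp
  · field_simp
    ring

theorem stmt_10 (γ : ℝ) (hγ : 0 < γ) (l : ℝ) (hl : l ∈ Ioo 0 (π / (2 * γ)))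
    (k : ℕ) (hk : 0 < k)
    (C : ℝ)
    (hC : C = (1/2) * (γ / (l * Real.sin (l * γ) * Real.cos (l * γ)) - 1 / l ^ 2)) :
    ∃ S : ℝ,
      HasSum
        (fun n : ℕ =>
          64 * (-1 : ℝ) ^ k * (1 + 2 * (n : ℝ)) ^ 2 * γ ^ 2 * Real.cos (l * γ) /
            (π ^ 4 * ((1 + 2 * (n : ℝ)) ^ 2 - 4 * (k : ℝ) ^ 2) *
              ((1 + 2 * (n : ℝ)) ^ 2 - (2 * l * γ / π) ^ 2) ^ 2)) S ∧
      2 * (-1 : ℝ) ^ k * (k : ℝ) ^ 2 * π ^ 2 * γ * Real.sin (l * γ) /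
          (l * ((k : ℝ) ^ 2 * π ^ 2 - γ ^ 2 * l ^ 2) ^ 2) + S =
        C * (2 * (-1 : ℝ) ^ k * l * γ * Real.sin (l * γ) /
          (-(k : ℝ) ^ 2 * π ^ 2 + l ^ 2 * γ ^ 2)) := by
  obtain ⟨l0, l1⟩ := hl
  have hlg : l * γ < π / 2 := by
    rw [lt_div_iff₀ (by positivity)] at l1; linarith
  have pp := pi_pos
  have lg0 : 0 < l * γ := by positivity
  have hc := cos_pos_of_mem_Ioo (x := l * γ) ⟨by linarith, hlg⟩
  have hs := sin_pos_of_pos_of_lt_pi lg0 (by linarith)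
  obtain ⟨y, hy⟩ : ∃ y, y = 2 * l * γ / π := ⟨_, rfl⟩
  have y0 : 0 < y := by rw [hy]; positivity
  have y1 : y < 1 := by rw [hy, div_lt_one pp]; linarith
  have hyt : π * y / 2 = l * γ := by rw [hy]; field_simp
  have hk1 : (1:ℝ) ≤ k := by exact_mod_cast hk
  have hab : 4 * (k:ℝ) ^ 2 - y ^ 2 ≠ 0 := by nlinarith
  have hD : (k : ℝ) ^ 2 * π ^ 2 - γ ^ 2 * l ^ 2 ≠ 0 := by
    have : (k : ℝ) ^ 2 * π ^ 2 - γ ^ 2 * l ^ 2 = π ^ 2 / 4 * (4 * (k:ℝ) ^ 2 - y ^ 2) := by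
      rw [hy]; field_simp; ring
    rw [this]; exact mul_ne_zero (by positivity) hab
  have hD' : -(k : ℝ) ^ 2 * π ^ 2 + l ^ 2 * γ ^ 2 ≠ 0 := by
    intro h; apply hD; linarith
  have H1 := (L3 k hk).mul_left (4 * (k:ℝ) ^ 2 / (4 * (k:ℝ) ^ 2 - y ^ 2) ^ 2)
  have H2 := (L2 y y0 y1).mul_left (4 * (k:ℝ) ^ 2 / (4 * (k:ℝ) ^ 2 - y ^ 2) ^ 2)
  have H3 := (L4 y y0 y1).mul_left (y ^ 2 / (4 * (k:ℝ) ^ 2 - y ^ 2))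
  have H := ((H1.sub H2).sub H3).mul_left (64 * (-1 : ℝ) ^ k * γ ^ 2 * Real.cos (l * γ) / π ^ 4)
  refine ⟨_, cv H (fun n => ?_) rfl, ?_⟩
  · rw [← hy] 
    have hn : (0:ℝ) ≤ n := n.cast_nonneg
    have h2 : (1 + 2 * (n : ℝ)) ^ 2 - y ^ 2 ≠ 0 := by nlinarith
    have h3 : (1 + 2 * (n : ℝ)) ^ 2 - 4 * (k : ℝ) ^ 2 ≠ 0 := by
      intro h
      have : (1 + 2 * (n : ℤ)) ^ 2 - 4 * k ^ 2 = 0 := by exact_mod_cast h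
      have : 2 * (2 * ((k:ℤ) ^ 2 - n - n ^ 2)) = 1 := by linarith
      omega
    field_simp
    ring
  · rw [hC, hyt, tan_eq_sin_div_cos]
    have hab' : 4 * (k:ℝ) ^ 2 - y ^ 2 = 4 / π ^ 2 * ((k : ℝ) ^ 2 * π ^ 2 - γ ^ 2 * l ^ 2) := by
      rw [hy]; field_simp; ring
    rw [hab', show -(k : ℝ) ^ 2 * π ^ 2 + l ^ 2 * γ ^ 2 = -((k : ℝ) ^ 2 * π ^ 2 - γ ^ 2 * l ^ 2) by ring, hy]
    clear H H1 H2 H3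
    generalize cos (l * γ) = c at *
    generalize sin (l * γ) = s at *
    generalize hDD : (k : ℝ) ^ 2 * π ^ 2 - γ ^ 2 * l ^ 2 = D at *
    field_simp
    ring
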